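/- Let M, k be positive integers and let Ψ, Ψ̂ : Matrix (Fin M) (Fin k) ℝ, θ : Fin k → ℝ, κ, κ̂ : Fin M → ℝ, s > 0, and ε ≥ 0 with ε ≤ s/2. Assume: (i) Ψ.mulVec θ = κ; (ii) for every x, s · ‖x‖ ≤ ‖Ψ.mulVec x‖; (iii) for every x, ‖(Ψ̂ − Ψ).mulVec x‖ ≤ ε · ‖x‖, where all norms are Euclidean. Then Ψ̂ᵀ * Ψ̂ is invertible and the perturbed least-squares estimate θ̂ = ((Ψ̂ᵀ * Ψ̂)⁻¹ * Ψ̂ᵀ).mulVec κ̂ satisfies ‖θ̂ − θ‖ ≤ (2 / s) · ( ‖κ̂ − κ‖ + ε · ‖θ‖ ). -/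

import Mathlib

/-!
The perturbed regressor is still bounded below: `‖Ψ̂ x‖ ≥ ‖Ψ x‖ - ‖(Ψ̂ - Ψ) x‖ ≥ (s - ε) ‖x‖`.
Hence it is injective and its Gram matrix is invertible. By the normal equations, the image
`Ψ̂ (θ̂ - θ)` of the error is the orthogonal projection of the residual
`κ̂ - Ψ̂ θ = (κ̂ - κ) - (Ψ̂ - Ψ) θ` onto the range of `Ψ̂`, so
`(s - ε) ‖θ̂ - θ‖ ≤ ‖κ̂ - κ‖ + ε ‖θ‖`. Finally `s - ε ≥ s / 2`.
-/

/-- Euclidean (ℓ²) norm of a finite real vector. -/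
noncomputable def euclNorm {d : ℕ} (v : Fin d → ℝ) : ℝ := Real.sqrt (∑ i, (v i) ^ 2)

section LeastSquares

open Matrix WithLp
open scoped ComplexOrder

variable {𝕜 m n : Type*} [RCLike 𝕜] [Fintype m] [Fintype n] {A B : Matrix m n 𝕜} {c s ε : ℝ}

theorem mulVec_injective_of_mul_norm_le (hc : 0 < c)
    (hA : ∀ x, c * ‖toLp 2 x‖ ≤ ‖toLp 2 (A *ᵥ x)‖) : Function.Injective A.mulVec := by
  refine (injective_iff_map_eq_zero A.mulVecLin).2 fun x (hx : A *ᵥ x = 0) => ?_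
  have hcx : c * ‖toLp 2 x‖ ≤ 0 := by simpa only [hx, toLp_zero, norm_zero] using hA x
  simpa only [norm_le_zero_iff, toLp_eq_zero] using nonpos_of_mul_nonpos_right hcx hc

theorem sub_mul_norm_le_norm_mulVec (hA : ∀ x, s * ‖toLp 2 x‖ ≤ ‖toLp 2 (A *ᵥ x)‖)
    (hBA : ∀ x, ‖toLp 2 ((B - A) *ᵥ x)‖ ≤ ε * ‖toLp 2 x‖) (x : n → 𝕜) :
    (s - ε) * ‖toLp 2 x‖ ≤ ‖toLp 2 (B *ᵥ x)‖ :=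
  calc
    (s - ε) * ‖toLp 2 x‖ = s * ‖toLp 2 x‖ - ε * ‖toLp 2 x‖ := sub_mul _ _ _
    _ ≤ ‖toLp 2 (A *ᵥ x)‖ - ‖toLp 2 ((B - A) *ᵥ x)‖ := sub_le_sub (hA x) (hBA x)
    _ ≤ ‖toLp 2 (A *ᵥ x) + toLp 2 ((B - A) *ᵥ x)‖ := norm_sub_le_norm_add _ _
    _ = ‖toLp 2 (B *ᵥ x)‖ := by rw [← toLp_add, ← add_mulVec, add_sub_cancel]

theorem norm_sub_mulVec_le_of_mulVec_eq {x : n → 𝕜} {y z : m → 𝕜} (hx : A *ᵥ x = y)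
    (hBA : ‖toLp 2 ((B - A) *ᵥ x)‖ ≤ ε * ‖toLp 2 x‖) :
    ‖toLp 2 (z - B *ᵥ x)‖ ≤ ‖toLp 2 (z - y)‖ + ε * ‖toLp 2 x‖ :=
  calc
    ‖toLp 2 (z - B *ᵥ x)‖ = ‖toLp 2 (z - y) - toLp 2 ((B - A) *ᵥ x)‖ := by
      rw [← toLp_sub, sub_mulVec, hx, sub_sub_sub_cancel_right]
    _ ≤ ‖toLp 2 (z - y)‖ + ‖toLp 2 ((B - A) *ᵥ x)‖ := norm_sub_le _ _
    _ ≤ ‖toLp 2 (z - y)‖ + ε * ‖toLp 2 x‖ := by gcongr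

theorem norm_mulVec_le_of_normal_equations {x : n → 𝕜} {y : m → 𝕜}
    (h : (Aᴴ * A) *ᵥ x = Aᴴ *ᵥ y) : ‖toLp 2 (A *ᵥ x)‖ ≤ ‖toLp 2 y‖ := by
  have orthogonal : inner 𝕜 (toLp 2 (A *ᵥ x)) (toLp 2 (y - A *ᵥ x)) = 0 := by
    rw [EuclideanSpace.inner_toLp_toLp, dotProduct_comm, star_mulVec, ← dotProduct_mulVec,
      mulVec_sub, mulVec_mulVec, h, sub_self, dotProduct_zero]
  have pythagoras := norm_add_sq_eq_norm_sq_add_norm_sq_of_inner_eq_zero _ _ orthogonal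
  rw [← toLp_add, add_sub_cancel] at pythagoras
  exact nonneg_le_nonneg_of_sq_le_sq (norm_nonneg _) <|
    (le_add_of_nonneg_right (mul_self_nonneg _)).trans_eq pythagoras.symm

variable [DecidableEq n]

theorem isUnit_conjTranspose_mul_self_of_injective (hA : Function.Injective A.mulVec) :
    IsUnit (Aᴴ * A) :=
  (PosDef.conjTranspose_mul_self A hA).isUnit

/-- The least-squares estimate `(Aᴴ A)⁻¹ Aᴴ y`, the minimizer of `‖A x - y‖` over `x` when `A` has
full column rank. Otherwise the inverse takes its junk value `0`, and so does the estimate. -/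
noncomputable def leastSquares (A : Matrix m n 𝕜) (y : m → 𝕜) : n → 𝕜 :=
  ((Aᴴ * A)⁻¹ * Aᴴ) *ᵥ y

theorem conjTranspose_mul_self_mulVec_leastSquares (hA : Function.Injective A.mulVec)
    (y : m → 𝕜) : (Aᴴ * A) *ᵥ leastSquares A y = Aᴴ *ᵥ y := by
  have hdet := (isUnit_iff_isUnit_det _).1 (isUnit_conjTranspose_mul_self_of_injective hA)
  rw [leastSquares, mulVec_mulVec, mul_nonsing_inv_cancel_left _ _ hdet]

theorem mul_norm_leastSquares_sub_le (hc : 0 < c)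
    (hA : ∀ x, c * ‖toLp 2 x‖ ≤ ‖toLp 2 (A *ᵥ x)‖) (y : m → 𝕜) (x : n → 𝕜) :
    c * ‖toLp 2 (leastSquares A y - x)‖ ≤ ‖toLp 2 (y - A *ᵥ x)‖ := by
  refine (hA _).trans (norm_mulVec_le_of_normal_equations ?_)
  rw [mulVec_sub, mulVec_sub, mulVec_mulVec,
    conjTranspose_mul_self_mulVec_leastSquares (mulVec_injective_of_mul_norm_le hc hA)]

theorem stmt_13_general {Ψ Ψhat : Matrix m n 𝕜} {θ : n → 𝕜} {κ κhat : m → 𝕜} (hεs : ε < s)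
    (hθ : Ψ *ᵥ θ = κ) (hsing : ∀ x, s * ‖toLp 2 x‖ ≤ ‖toLp 2 (Ψ *ᵥ x)‖)
    (hpert : ∀ x, ‖toLp 2 ((Ψhat - Ψ) *ᵥ x)‖ ≤ ε * ‖toLp 2 x‖) :
    IsUnit (Ψhatᴴ * Ψhat) ∧
      ‖toLp 2 (leastSquares Ψhat κhat - θ)‖
        ≤ (s - ε)⁻¹ * (‖toLp 2 (κhat - κ)‖ + ε * ‖toLp 2 θ‖) := by
  have hgap : 0 < s - ε := sub_pos.2 hεs
  have hlower := sub_mul_norm_le_norm_mulVec hsing hpert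
  refine ⟨isUnit_conjTranspose_mul_self_of_injective
    (mulVec_injective_of_mul_norm_le hgap hlower), (le_inv_mul_iff₀ hgap).2 ?_⟩
  exact (mul_norm_leastSquares_sub_le hgap hlower κhat θ).trans
    (norm_sub_mulVec_le_of_mulVec_eq hθ (hpert θ))

end LeastSquares

theorem euclNorm_eq_norm_toLp {d : ℕ} (v : Fin d → ℝ) : euclNorm v = ‖WithLp.toLp 2 v‖ := by
  simp only [euclNorm, EuclideanSpace.norm_eq, Real.norm_eq_abs, sq_abs]

/-- deterministic core of Theorem 3: if `Ψθ = κ`, the smallest singular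
value of `Ψ` is at least `s > 0`, and the perturbation `Ψ̂ − Ψ` has operator norm at most
`ε ≤ s/2`, then `Ψ̂ᵀΨ̂` is invertible and the perturbed least-squares estimate
`θ̂ = (Ψ̂ᵀΨ̂)⁻¹Ψ̂ᵀκ̂` satisfies `‖θ̂ − θ‖ ≤ (2/s)(‖κ̂ − κ‖ + ε‖θ‖)`. -/
theorem stmt_13 (M k : ℕ) (hM : 0 < M) (hk : 0 < k)
    (Ψ Ψhat : Matrix (Fin M) (Fin k) ℝ) (θ : Fin k → ℝ) (κ κhat : Fin M → ℝ)
    (s : ℝ) (hs : 0 < s) (ε : ℝ) (hε : 0 ≤ ε) (hεs : ε ≤ s / 2)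
    (hθ : Ψ.mulVec θ = κ)
    (hsing : ∀ x : Fin k → ℝ, s * euclNorm x ≤ euclNorm (Ψ.mulVec x))
    (hpert : ∀ x : Fin k → ℝ, euclNorm ((Ψhat - Ψ).mulVec x) ≤ ε * euclNorm x) :
    IsUnit (Ψhat.transpose * Ψhat) ∧
      euclNorm (((Ψhat.transpose * Ψhat)⁻¹ * Ψhat.transpose).mulVec κhat - θ)
        ≤ (2 / s) * (euclNorm (κhat - κ) + ε * euclNorm θ) := by
  simp only [euclNorm_eq_norm_toLp] at *
  obtain ⟨hunit, herr⟩ := stmt_13_general (κhat := κhat) (by linarith) hθ hsing hpert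
  have hgap : (s - ε)⁻¹ ≤ 2 / s := by
    rw [← inv_div]
    exact inv_anti₀ (half_pos hs) (by linarith)
  exact ⟨hunit, herr.trans (by gcongr)⟩
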